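/- For every even integer n ≥ 2, h(n,3) = n/2. -/

import Mathlib

/-!
A path on at least three vertices with monotone degrees contains three consecutive vertices
with non-decreasing degrees (read in a suitable direction), so `3 ≤ mp G` holds exactly when
`G` has a path `a, b, c` with `deg a ≤ deg b ≤ deg c` (`three_le_mp_iff`).

Upper bound: a perfect matching has `n / 2` edges and no path on three vertices; joining `u` and
`v` from different edges gives `u', u, v`, where `u'` is the partner of `u`, with degrees
`1, 2, 2`.

Lower bound: joining two isolated vertices only creates a new `K₂` component, so a 3-saturated
graph has at most one isolated vertex. The degree sum is therefore at least `n - 1`; it is even,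
as is `n`, so it is at least `n`.
-/

open SimpleGraph

variable {V : Type*}

/-- The degree of a vertex `v`: the number of neighbours of `v`. -/
noncomputable def gdeg (G : SimpleGraph V) (v : V) : ℕ := (G.neighborSet v).ncard

/-- A walk is degree monotone if the sequence of degrees of the vertices in the
order in which they appear on the walk is monotone (non-decreasing or non-increasing). -/
def IsDegMonotone (G : SimpleGraph V) {u v : V} (p : G.Walk u v) : Prop :=
  (p.support.map (gdeg G)).Chain' (· ≤ ·) ∨ (p.support.map (gdeg G)).Chain' (· ≥ ·)

/-- `mp G` is the maximum number of vertices of a degree monotone path in `G`. -/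
noncomputable def mp (G : SimpleGraph V) : ℕ :=
  sSup {n | ∃ (u v : V) (p : G.Walk u v), p.IsPath ∧ IsDegMonotone G p ∧ p.support.length = n}

/-- The graph obtained from `G` by adding the edge `uv`. -/
def addEdge (G : SimpleGraph V) (u v : V) : SimpleGraph V :=
  G ⊔ fromEdgeSet {s(u, v)}

/-- `G` is saturated if adding any edge between non-adjacent vertices increases `mp`. -/
def Saturated (G : SimpleGraph V) : Prop :=
  ∀ u v : V, u ≠ v → ¬ G.Adj u v → mp G < mp (addEdge G u v)

/-- `G` is `k`-saturated if `mp G < k` and adding any edge between non-adjacent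
vertices creates a degree monotone path on at least `k` vertices. -/
def KSaturated (k : ℕ) (G : SimpleGraph V) : Prop :=
  mp G < k ∧ ∀ u v : V, u ≠ v → ¬ G.Adj u v → k ≤ mp (addEdge G u v)

/-- `hSat n k` is the minimum number of edges of a `k`-saturated graph on `n` vertices. -/
noncomputable def hSat (n k : ℕ) : ℕ :=
  sInf {m | ∃ G : SimpleGraph (Fin n), KSaturated k G ∧ G.edgeSet.ncard = m}

theorem three_le_mp_iff [Finite V] (G : SimpleGraph V) :
    3 ≤ mp G ↔ ∃ a b c, G.Adj a b ∧ G.Adj b c ∧ a ≠ c ∧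
      gdeg G a ≤ gdeg G b ∧ gdeg G b ≤ gdeg G c := by
  classical
  have := Fintype.ofFinite V
  have hbdd : BddAbove {n | ∃ (u v : V) (p : G.Walk u v),
      p.IsPath ∧ IsDegMonotone G p ∧ p.support.length = n} := by
    refine ⟨Fintype.card V, ?_⟩
    rintro _ ⟨u, v, p, hp, -, rfl⟩
    exact hp.support_nodup.length_le_card
  constructor
  · intro h
    have hne : {n | ∃ (u v : V) (p : G.Walk u v),
        p.IsPath ∧ IsDegMonotone G p ∧ p.support.length = n}.Nonempty := by
      by_contra hne
      rw [Set.not_nonempty_iff_eq_empty] at hne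
      rw [mp, hne] at h
      simp at h
    obtain ⟨u, v, p, hp, hm, hl⟩ := Nat.sSup_mem hne hbdd
    change _ = mp G at hl
    rw [← hl] at h
    cases p with
    | nil => simp at h
    | @cons _ b _ h1 q =>
      cases q with
      | nil => simp at h
      | @cons _ c _ h2 r =>
        have huc : u ≠ c := by
          rintro rfl
          have := hp.support_nodup
          simp at this
        rcases hm with hm | hm <;> rw [Walk.support_cons, Walk.support_cons,
          ← Walk.cons_tail_support r, List.map_cons, List.map_cons, List.map_cons, List.Chain',
          List.isChain_cons_cons, List.isChain_cons_cons] at hm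
        · exact ⟨u, b, c, h1, h2, huc, hm.1, hm.2.1⟩
        · exact ⟨c, b, u, h2.symm, h1.symm, huc.symm, hm.2.1, hm.1⟩
  · rintro ⟨a, b, c, h1, h2, hac, hab, hbc⟩
    refine le_csSup hbdd ⟨a, c, .cons h1 (.cons h2 .nil), ?_, .inl ?_, by simp⟩
    · simp [h1.ne, h2.ne, hac]
    · simp [List.Chain', hab, hbc]

theorem gdeg_eq_zero_iff [Finite V] (G : SimpleGraph V) (v : V) : gdeg G v = 0 ↔ ∀ w, ¬ G.Adj v w := by
  rw [gdeg, Set.ncard_eq_zero (Set.toFinite _), Set.eq_empty_iff_forall_notMem]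
  rfl

theorem addEdge_adj (G : SimpleGraph V) (u v a b : V) : (addEdge G u v).Adj a b ↔
    G.Adj a b ∨ (a ≠ b ∧ ((a = u ∧ b = v) ∨ (a = v ∧ b = u))) := by
  simp [addEdge]
  tauto

theorem gdeg_addEdge_of_ne (G : SimpleGraph V) {u v a : V} (hu : a ≠ u) (hv : a ≠ v) :
    gdeg (addEdge G u v) a = gdeg G a := by
  have : (addEdge G u v).neighborSet a = G.neighborSet a := by
    ext b
    simp [addEdge_adj, hu, hv]
  rw [gdeg, gdeg, this]

theorem sum_gdeg [Fintype V] (G : SimpleGraph V) : ∑ v, gdeg G v = 2 * G.edgeSet.ncard := by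
  classical
  have h := G.sum_degrees_eq_twice_card_edges
  rw [← coe_edgeFinset, Set.ncard_coe_finset, ← h]
  refine Finset.sum_congr rfl fun v _ => ?_
  rw [gdeg, ← card_neighborFinset_eq_degree, ← Set.ncard_coe_finset, coe_neighborFinset]

/-- Joining two isolated vertices creates no monotone path on three vertices. -/
theorem KSaturated.isolated_unique [Finite V] {G : SimpleGraph V} (hG : KSaturated 3 G) {u v : V}
    (hu : gdeg G u = 0) (hv : gdeg G v = 0) : u = v := by
  by_contra hne
  have hu' := (gdeg_eq_zero_iff G u).1 hu
  have hv' := (gdeg_eq_zero_iff G v).1 hv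
  obtain ⟨a, b, c, hab, hbc, hac, h1, h2⟩ :=
    (three_le_mp_iff _).1 (hG.2 u v hne (hu' v))
  refine absurd hG.1 (not_lt.2 ((three_le_mp_iff G).2 ⟨a, b, c, ?_⟩))
  have hab' := hab
  have hbc' := hbc
  rw [addEdge_adj] at hab' hbc'
  have key : ∀ {x y}, G.Adj x y → x ≠ u ∧ x ≠ v := fun h =>
    ⟨fun e => hu' _ (e ▸ h), fun e => hv' _ (e ▸ h)⟩
  have hGab : G.Adj a b := by
    rcases hab' with h | h
    · exact h
    · rcases hbc' with h' | h'
      · have := key h'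
        tauto
      · grind
  have hGbc : G.Adj b c := by
    have := key hGab.symm
    tauto
  obtain ⟨ha, ha'⟩ := key hGab
  obtain ⟨hb, hb'⟩ := key hGbc
  obtain ⟨hc, hc'⟩ := key hGbc.symm
  rw [gdeg_addEdge_of_ne G ha ha', gdeg_addEdge_of_ne G hb hb'] at h1
  rw [gdeg_addEdge_of_ne G hc hc', gdeg_addEdge_of_ne G hb hb'] at h2
  exact ⟨hGab, hGbc, hac, h1, h2⟩

theorem KSaturated.card_le [Fintype V] {G : SimpleGraph V} (hG : KSaturated 3 G) :
    Fintype.card V ≤ 2 * G.edgeSet.ncard + 1 := by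
  classical
  have hz : (Finset.univ.filter fun v => gdeg G v = 0).card ≤ 1 :=
    Finset.card_le_one.2 fun a ha b hb => hG.isolated_unique (by simpa using ha) (by simpa using hb)
  rw [← sum_gdeg]
  calc Fintype.card V = ∑ _v : V, 1 := by simp
    _ ≤ ∑ v, (gdeg G v + if gdeg G v = 0 then 1 else 0) :=
        Finset.sum_le_sum fun v _ => by split_ifs <;> omega
    _ = ∑ v, gdeg G v + (Finset.univ.filter fun v => gdeg G v = 0).card := by
        rw [Finset.sum_add_distrib, Finset.card_filter]
    _ ≤ _ := by omega

/-- The perfect matching whose edges join each vertex to its image under the fixed-point-free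
involution `σ`. -/
def matching (σ : V → V) (h2 : ∀ v, σ (σ v) = v) (h1 : ∀ v, σ v ≠ v) : SimpleGraph V where
  Adj a b := b = σ a
  symm := ⟨fun a b h => by rw [h, h2]⟩
  loopless := ⟨fun a h => h1 a h.symm⟩

section

variable (σ : V → V) (h2 : ∀ v, σ (σ v) = v) (h1 : ∀ v, σ v ≠ v)

theorem gdeg_matching (v : V) : gdeg (matching σ h2 h1) v = 1 := by
  have : (matching σ h2 h1).neighborSet v = {σ v} := rfl
  rw [gdeg, this, Set.ncard_singleton]

theorem matching_saturated [Finite V] : KSaturated 3 (matching σ h2 h1) := by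
  constructor
  · by_contra h
    obtain ⟨a, b, c, hab, hbc, hac, -⟩ := (three_le_mp_iff _).1 (not_lt.1 h)
    have e1 : b = σ a := hab
    have e2 : c = σ b := hbc
    exact hac (by rw [e2, e1, h2])
  · intro u v huv hadj
    have hv : v ≠ σ u := hadj
    have hu : u ≠ σ v := fun e => hv (by rw [e, h2])
    have du : gdeg (addEdge (matching σ h2 h1) u v) u = 2 := by
      have : (addEdge (matching σ h2 h1) u v).neighborSet u = {σ u, v} := by
        ext b
        simp only [mem_neighborSet, addEdge_adj, matching, Set.mem_insert_iff,
          Set.mem_singleton_iff]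
        grind
      rw [gdeg, this, Set.ncard_pair hv.symm]
    have dv : gdeg (addEdge (matching σ h2 h1) u v) v = 2 := by
      have : (addEdge (matching σ h2 h1) u v).neighborSet v = {σ v, u} := by
        ext b
        simp only [mem_neighborSet, addEdge_adj, matching, Set.mem_insert_iff,
          Set.mem_singleton_iff]
        grind
      rw [gdeg, this, Set.ncard_pair hu.symm]
    refine (three_le_mp_iff _).2 ⟨σ u, u, v, ?_, ?_, hv.symm, ?_, ?_⟩
    · exact (addEdge_adj ..).2 (.inl (h2 u).symm)
    · exact (addEdge_adj ..).2 (.inr ⟨huv, .inl ⟨rfl, rfl⟩⟩)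
    · rw [gdeg_addEdge_of_ne _ (h1 u) hv.symm, gdeg_matching, du]
      norm_num
    · rw [du, dv]

end

theorem stmt_13 (n : ℕ) (hn : 2 ≤ n) (he : Even n) : hSat n 3 = n / 2 := by
  have hmem : n / 2 ∈ {m | ∃ G : SimpleGraph (Fin n), KSaturated 3 G ∧ G.edgeSet.ncard = m} := by
    -- The matching pairs `2i` with `2i + 1`; evenness of `n` keeps `2i + 1` in range.
    let σ : Fin n → Fin n := fun i =>
      ⟨if i.1 % 2 = 0 then i.1 + 1 else i.1 - 1, by
        have := i.2
        obtain ⟨k, hk⟩ := he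
        split_ifs <;> omega⟩
    have h2 : ∀ v, σ (σ v) = v := fun v => by
      ext
      simp only [σ]
      split_ifs <;> omega
    have h1 : ∀ v, σ v ≠ v := fun v e => by
      have := congrArg Fin.val e
      simp only [σ] at this
      split_ifs at this <;> omega
    refine ⟨matching σ h2 h1, matching_saturated σ h2 h1, ?_⟩
    have := sum_gdeg (matching σ h2 h1)
    simp only [gdeg_matching, Finset.sum_const, Finset.card_univ, Fintype.card_fin,
      smul_eq_mul, mul_one] at this
    omega
  refine le_antisymm (Nat.sInf_le hmem) (le_csInf ⟨_, hmem⟩ ?_)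
  rintro m ⟨G, hG, rfl⟩
  have := hG.card_le
  rw [Fintype.card_fin] at this
  obtain ⟨k, rfl⟩ := he
  omega
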